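/- Let F be a regular bi-Hilbertian A–B-bimodule with right Watatani index e^β ∈ M(A) (positive, central, invertible). Then the map P₀ : K(F_B) → K(F_B) defined by P₀(T) = e^{−β} Υ(T) Id_F (where Υ(Θ_{e,f}) = {}_A⟨e, f⟩) is an A-bilinear adjointable projection on the bi-Hilbertian bimodule K(F_B) ≅ F ⊗_B F*, and its image A · Id_F is a complemented sub-bimodule isomorphic to the identity bimodule A. -/

import Mathlib

noncomputable section

open Filter Topology

universe u

/-- A bundled right Hilbert C*-module structure over a (possibly non-unital)
C*-algebra `B` on a complete normed complex vector space `X`.  The fields record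
the right `B`-action, the `B`-valued inner product, and their standard axioms,
including positivity of inner products and compatibility of the norm. -/
structure HilbertModule (B : Type u) (X : Type u)
    [NonUnitalCStarAlgebra B] [NormedAddCommGroup X] [NormedSpace ℂ X] [CompleteSpace X] :
    Type u where
  smulR : X → B → X
  inner : X → X → B
  smulR_add : ∀ (x : X) (b c : B), smulR x (b + c) = smulR x b + smulR x c
  add_smulR : ∀ (x y : X) (b : B), smulR (x + y) b = smulR x b + smulR y b
  smulR_mul : ∀ (x : X) (b c : B), smulR x (b * c) = smulR (smulR x b) c
  smulC_smulR : ∀ (c : ℂ) (x : X) (b : B), smulR (c • x) b = c • smulR x b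
  inner_add_left : ∀ x y z : X, inner (x + y) z = inner x z + inner y z
  inner_add_right : ∀ x y z : X, inner x (y + z) = inner x y + inner x z
  inner_smulR_right : ∀ (x y : X) (b : B), inner x (smulR y b) = inner x y * b
  inner_smulC_right : ∀ (c : ℂ) (x y : X), inner x (c • y) = c • inner x y
  star_inner : ∀ x y : X, star (inner x y) = inner y x
  inner_self_pos : ∀ x : X, ∃ b : B, inner x x = star b * b
  norm_inner_self : ∀ x : X, ‖x‖ ^ 2 = ‖inner x x‖

/-- `T : X → Y` and `S : Y → X` are mutually adjoint operators between
right Hilbert `B`-modules. -/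
def HilbertModule.IsAdjointPair {B X Y : Type u} [NonUnitalCStarAlgebra B]
    [NormedAddCommGroup X] [NormedSpace ℂ X] [CompleteSpace X]
    [NormedAddCommGroup Y] [NormedSpace ℂ Y] [CompleteSpace Y]
    (hX : HilbertModule B X) (hY : HilbertModule B Y)
    (T : X → Y) (S : Y → X) : Prop :=
  ∀ (x : X) (y : Y), hY.inner (T x) y = hX.inner x (S y)

/-- Positivity in a C*-algebra, expressed as being of the form `star c * c`. -/
def IsPositiveElem {B : Type u} [NonUnitalCStarAlgebra B] (b : B) : Prop :=
  ∃ c : B, b = star c * c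

/-- Positivity of a matrix over a C*-algebra. -/
def MatrixIsPositive {A : Type u} [NonUnitalCStarAlgebra A] {n : ℕ}
    (M : Matrix (Fin n) (Fin n) A) : Prop :=
  ∃ N : Matrix (Fin n) (Fin n) A, M = N.conjTranspose * N

/-- A sequential (the algebras in question are separable) approximate unit. -/
structure IsApproxUnit {A : Type u} [NonUnitalCStarAlgebra A] (e : ℕ → A) : Prop where
  pos : ∀ n, IsPositiveElem (e n)
  norm_le_one : ∀ n, ‖e n‖ ≤ 1
  tendsto_mul_left : ∀ a : A, Tendsto (fun n => e n * a) atTop (𝓝 a)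
  tendsto_mul_right : ∀ a : A, Tendsto (fun n => a * e n) atTop (𝓝 a)

/-- A completely positive map between C*-algebras: a linear map sending positive
matrices to positive matrices at every matrix level. -/
structure IsCPMap {A B : Type u} [NonUnitalCStarAlgebra A] [NonUnitalCStarAlgebra B]
    (ρ : A → B) : Prop where
  map_add : ∀ a a', ρ (a + a') = ρ a + ρ a'
  map_smul : ∀ (c : ℂ) (a : A), ρ (c • a) = c • ρ a
  map_pos_matrix : ∀ (n : ℕ) (M : Matrix (Fin n) (Fin n) A),
    MatrixIsPositive M → MatrixIsPositive (M.map ρ)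

/-- A map between C*-algebras is strict if some approximate unit of the domain is
sent to a strictly Cauchy net in the multiplier algebra of the codomain. -/
def IsStrictMap {A B : Type u} [NonUnitalCStarAlgebra A] [NonUnitalCStarAlgebra B]
    (ρ : A → B) : Prop :=
  ∃ e : ℕ → A, IsApproxUnit e ∧
    ∀ b : B, CauchySeq (fun n => ρ (e n) * b) ∧ CauchySeq (fun n => b * ρ (e n))

/-- A completely positive map from `A` into the adjointable operators on a
right Hilbert `B`-module `X`. -/
structure IsCPAction {A B X : Type u} [NonUnitalCStarAlgebra A] [NonUnitalCStarAlgebra B]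
    [NormedAddCommGroup X] [NormedSpace ℂ X] [CompleteSpace X]
    (hX : HilbertModule B X) (ρ : A → X → X) : Prop where
  map_add : ∀ a a' x, ρ (a + a') x = ρ a x + ρ a' x
  map_smul : ∀ (c : ℂ) (a : A) x, ρ (c • a) x = c • ρ a x
  add_right : ∀ a x y, ρ a (x + y) = ρ a x + ρ a y
  adjointable : ∀ a, ∃ S, HilbertModule.IsAdjointPair hX hX (ρ a) S
  pos : ∀ (n : ℕ) (M : Matrix (Fin n) (Fin n) A), MatrixIsPositive M →
    ∀ x : Fin n → X, IsPositiveElem (∑ i, ∑ j, hX.inner (x i) (ρ (M i j) (x j)))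

/-- Strictness for a completely positive map into the adjointable operators on a
Hilbert module: some approximate unit is mapped to a strictly Cauchy net. -/
def IsStrictAction {A B X : Type u} [NonUnitalCStarAlgebra A] [NonUnitalCStarAlgebra B]
    [NormedAddCommGroup X] [NormedSpace ℂ X] [CompleteSpace X]
    (hX : HilbertModule B X) (ρ : A → X → X) : Prop :=
  ∃ e : ℕ → A, IsApproxUnit e ∧ ∃ S : ℕ → X → X,
    (∀ n, HilbertModule.IsAdjointPair hX hX (ρ (e n)) (S n)) ∧
    ∀ x, CauchySeq (fun n => ρ (e n) x) ∧ CauchySeq (fun n => S n x)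

/-- A left action of `A` on a Hilbert `B`-module by adjointable operators via a
*-homomorphism, i.e. the structure of an `A`–`B`-correspondence. -/
structure IsCorrespondenceAction {A B X : Type u} [NonUnitalCStarAlgebra A]
    [NonUnitalCStarAlgebra B]
    [NormedAddCommGroup X] [NormedSpace ℂ X] [CompleteSpace X]
    (hX : HilbertModule B X) (φ : A → X → X) : Prop where
  map_add : ∀ a a' x, φ (a + a') x = φ a x + φ a' x
  map_mul : ∀ a a' x, φ (a * a') x = φ a (φ a' x)
  map_smul : ∀ (c : ℂ) (a : A) x, φ (c • a) x = c • φ a x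
  add_right : ∀ a x y, φ a (x + y) = φ a x + φ a y
  star_adjoint : ∀ a, HilbertModule.IsAdjointPair hX hX (φ a) (φ (star a))

/-- The trivial right Hilbert `B`-module structure on `B` itself. -/
def trivHM (B : Type u) [NonUnitalCStarAlgebra B] : HilbertModule B B where
  smulR b c := b * c
  inner b c := star b * c
  smulR_add := by intros; simp [mul_add]
  add_smulR := by intros; simp [add_mul]
  smulR_mul := by intros; simp [mul_assoc]
  smulC_smulR := by intros; simp [smul_mul_assoc]
  inner_add_left := by intros; simp [star_add, add_mul]
  inner_add_right := by intros; simp [mul_add]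
  inner_smulR_right := by intros; simp [mul_assoc]
  inner_smulC_right := by intros; simp [mul_smul_comm]
  star_inner := by intros; simp [star_mul, mul_assoc]
  inner_self_pos := fun b => ⟨b, rfl⟩
  norm_inner_self := by intro b; rw [CStarRing.norm_star_mul_self, pow_two]

/-- `T` is "compact relative to the projection/identification `Q`": it can be
approximated in operator norm by finite sums of rank-one operators
`θ_{u,v} : z ↦ u⟨v, z⟩` with vectors in the image of `Q`.  With `Q = id` this
says `T ∈ K(X)`. -/
def IsCptOn {B X : Type u} [NonUnitalCStarAlgebra B]
    [NormedAddCommGroup X] [NormedSpace ℂ X] [CompleteSpace X]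
    (hX : HilbertModule B X) (Q : X → X) (T : X → X) : Prop :=
  ∀ ε : ℝ, 0 < ε → ∃ (n : ℕ) (u v : Fin n → X), ∀ z : X,
    ‖T (Q z) - ∑ i, hX.smulR (Q (u i)) (hX.inner (Q (v i)) (Q z))‖ ≤ ε * ‖Q z‖

/-- A bi-Hilbertian `A`–`B`-bimodule: a right Hilbert `B`-module `F` with an
additional left `A`-action `actL` and left `A`-valued inner product `innerL`
making it a left Hilbert `A`-module, such that each action is adjointable for
the other inner product and the two norms are equivalent. -/
structure BiHilbertModule (A B F : Type u)
    [NonUnitalCStarAlgebra A] [NonUnitalCStarAlgebra B]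
    [NormedAddCommGroup F] [NormedSpace ℂ F] [CompleteSpace F] : Type u where
  right : HilbertModule B F
  actL : A → F → F
  actL_corr : IsCorrespondenceAction right actL
  innerL : F → F → A
  innerL_add_left : ∀ x y z, innerL (x + y) z = innerL x z + innerL y z
  innerL_add_right : ∀ x y z, innerL x (y + z) = innerL x y + innerL x z
  innerL_actL_left : ∀ (a : A) x y, innerL (actL a x) y = a * innerL x y
  star_innerL : ∀ x y, star (innerL x y) = innerL y x
  innerL_pos : ∀ x, IsPositiveElem (innerL x x)
  -- the right `B`-action is adjointable for the left inner product
  innerL_smulR : ∀ x y (b : B), innerL (right.smulR x b) y = innerL x (right.smulR y (star b))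
  -- the two inner products induce equivalent norms
  norm_equiv : ∃ c : ℝ, 0 < c ∧ ∀ x,
    ‖innerL x x‖ ≤ c * ‖right.inner x x‖ ∧ ‖right.inner x x‖ ≤ c * ‖innerL x x‖

/-- A model of the multiplier algebra `M(A)` of `A`: a unital C*-algebra `MA`
containing `A` isometrically as an essential two-sided ideal. -/
structure MultiplierData (A MA : Type u) [NonUnitalCStarAlgebra A] [CStarAlgebra MA] :
    Type u where
  ι : A →⋆ₙₐ[ℂ] MA
  isometric : ∀ a : A, ‖ι a‖ = ‖a‖
  ideal_left : ∀ (m : MA) (a : A), ∃ a', ι a' = m * ι a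
  ideal_right : ∀ (m : MA) (a : A), ∃ a', ι a' = ι a * m
  essential : ∀ m : MA, (∀ a : A, m * ι a = 0) → m = 0

/-- Regularity data for a bi-Hilbertian bimodule `F` of finite right Watatani
index: the index `e^β` (with inverse `e^{-β}` and square root `e^{-β/2}` of the
inverse) as a positive central invertible multiplier, defined as the strict
limit of `Σⱼ {}_A⟨uⱼ, uⱼ⟩` over a right frame `(uⱼ)`, together with the extension
of the left action to multipliers and the regularity conditions. -/
structure WatataniData {A B F MA : Type u}
    [NonUnitalCStarAlgebra A] [NonUnitalCStarAlgebra B] [CStarAlgebra MA]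
    [NormedAddCommGroup F] [NormedSpace ℂ F] [CompleteSpace F]
    (bi : BiHilbertModule A B F) (M : MultiplierData A MA) : Type u where
  actM : MA → F → F
  actM_one : ∀ x, actM 1 x = x
  actM_mul : ∀ m m' x, actM (m * m') x = actM m (actM m' x)
  actM_add : ∀ m x y, actM m (x + y) = actM m x + actM m y
  actM_ι : ∀ (a : A) x, actM (M.ι a) x = bi.actL a x
  actM_adjoint : ∀ m, HilbertModule.IsAdjointPair bi.right bi.right (actM m) (actM (star m))
  eβ : MA
  einvβ : MA
  ehalf : MA
  eβ_central : ∀ m, eβ * m = m * eβ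
  einvβ_central : ∀ m, einvβ * m = m * einvβ
  ehalf_central : ∀ m, ehalf * m = m * ehalf
  eβ_pos : IsPositiveElem eβ
  ehalf_pos : IsPositiveElem ehalf
  eβ_inv : eβ * einvβ = 1
  ehalf_sq : ehalf * ehalf = einvβ
  frame : ℕ → F
  frame_spec : ∀ z : F, Tendsto
    (fun N => ∑ j ∈ Finset.range N, bi.right.smulR (frame j) (bi.right.inner (frame j) z))
    atTop (𝓝 z)
  -- `e^β` is the strict limit of `Σⱼ {}_A⟨uⱼ, uⱼ⟩`
  index_spec : ∀ a : A, Tendsto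
    (fun N => ∑ j ∈ Finset.range N, M.ι (bi.innerL (frame j) (frame j)) * M.ι a)
    atTop (𝓝 (eβ * M.ι a))
  -- finite index: the left action is by compact operators
  finite_index : ∀ a : A, IsCptOn bi.right id (bi.actL a)
  -- regularity: the left action and the right action are injective
  injective_left : ∀ a : A, (∀ x : F, bi.actL a x = 0) → a = 0
  injective_right : ∀ b : B, (∀ x : F, bi.right.smulR x b = 0) → b = 0

/-- The map `Υ : K(F_B) → A`, `Υ(Θ_{e,f}) = {}_A⟨e, f⟩`, on compact operators
(cf. Statement 13), recorded with its characteristic properties. -/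
structure UpsilonData {A B F : Type u}
    [NonUnitalCStarAlgebra A] [NonUnitalCStarAlgebra B]
    [NormedAddCommGroup F] [NormedSpace ℂ F] [CompleteSpace F]
    (bi : BiHilbertModule A B F) : Type u where
  Υ : (F → F) → A
  rank_one : ∀ e f : F, Υ (fun z => bi.right.smulR e (bi.right.inner f z)) = bi.innerL e f
  add : ∀ T S : F → F, IsCptOn bi.right id T → IsCptOn bi.right id S →
    Υ (fun z => T z + S z) = Υ T + Υ S
  bilin_left : ∀ (a : A) (T : F → F), IsCptOn bi.right id T →
    Υ (fun z => bi.actL a (T z)) = a * Υ T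
  bilin_right : ∀ (a : A) (T : F → F), IsCptOn bi.right id T →
    Υ (fun z => T (bi.actL a z)) = Υ T * a
  pos : ∀ T T' : F → F, IsCptOn bi.right id T →
    HilbertModule.IsAdjointPair bi.right bi.right T T' →
    IsPositiveElem (Υ (fun z => T' (T z)))

namespace HilbertModule

section Basic

variable {B X : Type u} [NonUnitalCStarAlgebra B] [NormedAddCommGroup X] [NormedSpace ℂ X]
  [CompleteSpace X] (hX : HilbertModule B X)

theorem inner_smulC_left (c : ℂ) (x y : X) : hX.inner (c • x) y = star c • hX.inner x y := by
  rw [← hX.star_inner, hX.inner_smulC_right, star_smul, hX.star_inner]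

theorem inner_smulR_left (x y : X) (b : B) :
    hX.inner (hX.smulR x b) y = star b * hX.inner x y := by
  rw [← hX.star_inner, hX.inner_smulR_right, star_mul, hX.star_inner]

/-- The inner product in the second variable, as a linear map. -/
def innerₗ (x : X) : X →ₗ[ℂ] B where
  toFun := hX.inner x
  map_add' := hX.inner_add_right x
  map_smul' c y := hX.inner_smulC_right c x y

theorem inner_sub_right (x y z : X) : hX.inner x (y - z) = hX.inner x y - hX.inner x z :=
  map_sub (hX.innerₗ x) y z

theorem inner_zero_right (x : X) : hX.inner x 0 = 0 := map_zero (hX.innerₗ x)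

theorem inner_sub_left (x y z : X) : hX.inner (x - y) z = hX.inner x z - hX.inner y z := by
  rw [← hX.star_inner, inner_sub_right, star_sub, hX.star_inner, hX.star_inner]

theorem inner_zero_left (x : X) : hX.inner 0 x = 0 := by
  rw [← hX.star_inner, inner_zero_right, star_zero]

theorem eq_zero_of_inner_self {x : X} (h : hX.inner x x = 0) : x = 0 := by
  have := hX.norm_inner_self x
  rw [h, norm_zero] at this
  simpa using this

theorem ext_inner {x y : X} (h : ∀ z, hX.inner x z = hX.inner y z) : x = y :=
  sub_eq_zero.1 <| hX.eq_zero_of_inner_self <| by rw [inner_sub_left, h, sub_self]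

theorem inner_polarization (x y : X) :
    (4 : ℂ) • hX.inner x y = hX.inner (x + y) (x + y) - hX.inner (x - y) (x - y)
      - Complex.I • hX.inner (x + Complex.I • y) (x + Complex.I • y)
      + Complex.I • hX.inner (x - Complex.I • y) (x - Complex.I • y) := by
  simp only [hX.inner_add_left, hX.inner_add_right, inner_sub_left, inner_sub_right,
    inner_smulC_left, hX.inner_smulC_right, smul_add, smul_sub, smul_smul]
  simp only [RCLike.star_def, Complex.conj_I, mul_neg, Complex.I_mul_I, neg_smul,
    neg_neg, one_smul]
  module

theorem norm_inner_le_sq (x y : X) : ‖hX.inner x y‖ ≤ (‖x‖ + ‖y‖) ^ 2 := by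
  have key : ∀ z : X, ‖z‖ ≤ ‖x‖ + ‖y‖ → ‖hX.inner z z‖ ≤ (‖x‖ + ‖y‖) ^ 2 := fun z hz => by
    rw [← hX.norm_inner_self]; gcongr
  have hI : ‖Complex.I • y‖ = ‖y‖ := by simp [norm_smul]
  have h4 := congrArg norm (hX.inner_polarization x y)
  rw [norm_smul] at h4
  have h1 := key _ (norm_add_le x y)
  have h2 := key _ (norm_sub_le x y)
  have h3 := key _ (hI ▸ norm_add_le x (Complex.I • y))
  have h5 := key _ (hI ▸ norm_sub_le x (Complex.I • y))
  have hn : ∀ b : B, ‖Complex.I • b‖ = ‖b‖ := fun b => by simp [norm_smul]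
  have h6 : ∀ a b c d : B, ‖a - b - Complex.I • c + Complex.I • d‖ ≤ ‖a‖ + ‖b‖ + ‖c‖ + ‖d‖ :=
    fun a b c d => by
      have := norm_add_le (a - b - Complex.I • c) (Complex.I • d)
      have := norm_sub_le (a - b) (Complex.I • c)
      have := norm_sub_le a b
      rw [hn] at *
      linarith [hn c]
  have h7 := h6 (hX.inner (x + y) (x + y)) (hX.inner (x - y) (x - y))
    (hX.inner (x + Complex.I • y) (x + Complex.I • y))
    (hX.inner (x - Complex.I • y) (x - Complex.I • y))
  norm_num at h4
  linarith

/-- A Cauchy–Schwarz inequality with a non-optimal constant. -/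
theorem norm_inner_le (x y : X) : ‖hX.inner x y‖ ≤ 4 * ‖x‖ * ‖y‖ := by
  rcases eq_or_ne x 0 with rfl | hx
  · simp [inner_zero_left]
  rcases eq_or_ne y 0 with rfl | hy
  · simp [inner_zero_right]
  have hx' := norm_pos_iff.2 hx
  have hy' := norm_pos_iff.2 hy
  have h := hX.norm_inner_le_sq (((‖x‖⁻¹ : ℝ) : ℂ) • x) (((‖y‖⁻¹ : ℝ) : ℂ) • y)
  rw [inner_smulC_left, hX.inner_smulC_right] at h
  simp only [norm_smul, norm_star, Complex.norm_real, norm_inv, norm_norm] at h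
  rw [inv_mul_cancel₀ hx'.ne', inv_mul_cancel₀ hy'.ne'] at h
  norm_num at h
  rw [← mul_assoc, ← mul_inv, inv_mul_le_iff₀ (by positivity)] at h
  linarith

theorem norm_smulR_le (x : X) (b : B) : ‖hX.smulR x b‖ ≤ ‖x‖ * ‖b‖ := by
  refine le_of_sq_le_sq ?_ (by positivity)
  rw [hX.norm_inner_self, hX.inner_smulR_right, inner_smulR_left, mul_pow, hX.norm_inner_self x]
  calc _ ≤ ‖star b‖ * ‖hX.inner x x‖ * ‖b‖ := (norm_mul_le _ _).trans (by gcongr; apply norm_mul_le)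
    _ = _ := by rw [norm_star]; ring

theorem continuous_inner_left (y : X) : Continuous fun x => hX.inner x y := by
  refine continuous_iff_continuousAt.2 fun x => tendsto_iff_norm_sub_tendsto_zero.2 ?_
  refine squeeze_zero (fun _ => norm_nonneg _)
    (fun z => (hX.inner_sub_left z x y ▸ hX.norm_inner_le (z - x) y)) ?_
  have : Continuous fun z : X => 4 * ‖z - x‖ * ‖y‖ := by fun_prop
  simpa using this.tendsto x

theorem continuous_inner_right (x : X) : Continuous fun y => hX.inner x y := by
  simpa only [hX.star_inner] using (hX.continuous_inner_left x).star

variable {hX}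

theorem IsAdjointPair.symm {T S : X → X} (h : IsAdjointPair hX hX T S) :
    IsAdjointPair hX hX S T := fun x y => by
  rw [← hX.star_inner, ← h, hX.star_inner]

theorem IsAdjointPair.comp {T S T' S' : X → X} (h : IsAdjointPair hX hX T T')
    (h' : IsAdjointPair hX hX S S') :
    IsAdjointPair hX hX (fun z => T (S z)) (fun z => S' (T' z)) := fun x y => by
  rw [h, h']

theorem IsAdjointPair.add {T S T' S' : X → X} (h : IsAdjointPair hX hX T T')
    (h' : IsAdjointPair hX hX S S') :
    IsAdjointPair hX hX (fun z => T z + S z) (fun z => T' z + S' z) := fun x y => by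
  rw [hX.inner_add_left, hX.inner_add_right, h, h']

theorem IsAdjointPair.sub {T S T' S' : X → X} (h : IsAdjointPair hX hX T T')
    (h' : IsAdjointPair hX hX S S') :
    IsAdjointPair hX hX (fun z => T z - S z) (fun z => T' z - S' z) := fun x y => by
  rw [inner_sub_left, inner_sub_right, h, h']

theorem IsAdjointPair.smul {T T' : X → X} (h : IsAdjointPair hX hX T T') (c : ℂ) :
    IsAdjointPair hX hX (fun z => c • T z) (fun z => star c • T' z) := fun x y => by
  rw [inner_smulC_left, hX.inner_smulC_right, h]

theorem IsAdjointPair.id : IsAdjointPair hX hX (fun z => z) (fun z => z) := fun _ _ => rfl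

theorem IsAdjointPair.map_add {T S : X → X} (h : IsAdjointPair hX hX T S) (x y : X) :
    T (x + y) = T x + T y :=
  hX.ext_inner fun z => by simp only [h _ _, hX.inner_add_left]

theorem IsAdjointPair.map_smul {T S : X → X} (h : IsAdjointPair hX hX T S) (c : ℂ) (x : X) :
    T (c • x) = c • T x :=
  hX.ext_inner fun z => by simp only [h _ _, inner_smulC_left]

theorem IsAdjointPair.map_smulR {T S : X → X} (h : IsAdjointPair hX hX T S) (x : X) (b : B) :
    T (hX.smulR x b) = hX.smulR (T x) b :=
  hX.ext_inner fun z => by simp only [h _ _, inner_smulR_left]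

/-- An adjointable operator is a bounded linear map. -/
def IsAdjointPair.toCLM {T S : X → X} (h : IsAdjointPair hX hX T S) : X →L[ℂ] X where
  toFun := T
  map_add' := h.map_add
  map_smul' := h.map_smul
  cont := by
    let g : X →ₗ[ℂ] X := { toFun := T, map_add' := h.map_add, map_smul' := h.map_smul }
    refine g.continuous_of_seq_closed_graph fun u x y hu hy => hX.ext_inner fun z => ?_
    refine tendsto_nhds_unique (((hX.continuous_inner_left z).tendsto y).comp hy) ?_
    have := ((hX.continuous_inner_left (S z)).tendsto x).comp hu
    simpa only [Function.comp_def, ← h _ _] using! this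

theorem IsAdjointPair.toCLM_apply {T S : X → X} (h : IsAdjointPair hX hX T S) (x : X) :
    h.toCLM x = T x := rfl

variable (hX)

theorem isAdjointPair_rankOne (u v : X) :
    IsAdjointPair hX hX (fun z => hX.smulR u (hX.inner v z))
      (fun z => hX.smulR v (hX.inner u z)) := fun x y => by
  rw [inner_smulR_left, hX.inner_smulR_right, hX.star_inner]

/-- The square root of `1 - S` for a small self-adjoint operator `S`. -/
theorem exists_sqrt_one_sub (S : X →L[ℂ] X) (hS : IsAdjointPair hX hX S S) (hn : ‖S‖ ≤ 1 / 2) :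
    ∃ W : X → X, IsAdjointPair hX hX W W ∧ ∀ x, W (W x) = x - S x := by
  let s : Set (X →L[ℂ] X) := {V | ‖V‖ ≤ 1 / 2 ∧ IsAdjointPair hX hX V V}
  let f : (X →L[ℂ] X) → (X →L[ℂ] X) := fun V => (1 / 2 : ℂ) • (S + V * V)
  have hhalf : ‖(1 / 2 : ℂ)‖ = 1 / 2 := by simp
  have hs : IsComplete s := by
    refine IsClosed.isComplete (IsClosed.inter ?_ ?_)
    · exact isClosed_le continuous_norm continuous_const
    · change IsClosed {V : X →L[ℂ] X | ∀ x y : X, hX.inner (V x) y = hX.inner x (V y)}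
      simp only [Set.ofPred_forall]
      refine isClosed_iInter fun x => isClosed_iInter fun y => isClosed_eq ?_ ?_
      · exact (hX.continuous_inner_left y).comp (by fun_prop)
      · exact (hX.continuous_inner_right x).comp (by fun_prop)
  have hf : Set.MapsTo f s s := by
    rintro V ⟨hV, hVa⟩
    refine ⟨?_, ?_⟩
    · calc ‖f V‖ ≤ 1 / 2 * (‖S‖ + ‖V‖ * ‖V‖) := by
            rw [norm_smul, hhalf]
            gcongr
            exact (norm_add_le _ _).trans (by gcongr; apply norm_mul_le)
        _ ≤ 1 / 2 * (1 / 2 + 1 / 2 * (1 / 2)) := by gcongr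
        _ ≤ 1 / 2 := by norm_num
    · have := (hS.add (hVa.comp hVa)).smul (1 / 2)
      have h2 : star (1 / 2 : ℂ) = 1 / 2 := by simp
      rw [h2] at this
      exact this
  have hc : ContractingWith (1 / 2) (hf.restrict f s s) := by
    refine ⟨by norm_num, LipschitzWith.of_dist_le_mul fun V W => ?_⟩
    obtain ⟨V, hV, -⟩ := V
    obtain ⟨W, hW, -⟩ := W
    simp only [Subtype.dist_eq, Set.MapsTo.val_restrict_apply, dist_eq_norm]
    have : f V - f W = (1 / 2 : ℂ) • (V * (V - W) + (V - W) * W) := by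
      simp only [f, ← smul_sub]; congr 1; noncomm_ring
    rw [this, norm_smul, hhalf]
    calc _ ≤ 1 / 2 * (‖V‖ * ‖V - W‖ + ‖V - W‖ * ‖W‖) := by
          gcongr
          refine (norm_add_le _ _).trans ?_
          gcongr <;> apply norm_mul_le
      _ ≤ 1 / 2 * (1 / 2 * ‖V - W‖ + ‖V - W‖ * (1 / 2)) := by gcongr
      _ = _ := by push_cast; ring
  have h0 : (0 : X →L[ℂ] X) ∈ s :=
    ⟨by simp, fun x y => by simp [inner_zero_left, inner_zero_right]⟩
  obtain ⟨V, ⟨-, hVa⟩, hfix, -⟩ := hc.exists_fixedPoint' hs hf h0 (edist_ne_top _ _)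
  refine ⟨fun z => z - V z, IsAdjointPair.id.sub hVa, fun x => ?_⟩
  have hx : (1 / 2 : ℂ) • (S x + V (V x)) = V x := DFunLike.congr_fun hfix x
  have hx2 : S x = (2 : ℂ) • V x - V (V x) := eq_sub_of_add_eq <|
    calc S x + V (V x) = (2 : ℂ) • ((1 / 2 : ℂ) • (S x + V (V x))) := by module
      _ = (2 : ℂ) • V x := by rw [hx]
  change x - V x - V (x - V x) = x - S x
  rw [map_sub, hx2]
  module

end Basic

end HilbertModule

namespace IsCptOn

variable {B X : Type u} [NonUnitalCStarAlgebra B] [NormedAddCommGroup X] [NormedSpace ℂ X]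
  [CompleteSpace X] {hX : HilbertModule B X}

theorem zero : IsCptOn hX id fun _ => 0 := fun ε hε => ⟨0, 0, 0, fun z => by
  simpa using by positivity⟩

theorem rankOne (u v : X) : IsCptOn hX id fun z => hX.smulR u (hX.inner v z) := fun ε hε =>
  ⟨1, fun _ => u, fun _ => v, fun z => by simpa using by positivity⟩

theorem add {T S : X → X} (hT : IsCptOn hX id T) (hS : IsCptOn hX id S) :
    IsCptOn hX id fun z => T z + S z := fun ε hε => by
  obtain ⟨n, u, v, h⟩ := hT (ε / 2) (by positivity)
  obtain ⟨m, u', v', h'⟩ := hS (ε / 2) (by positivity)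
  refine ⟨n + m, Fin.append u u', Fin.append v v', fun z => ?_⟩
  have h1 := h z
  have h2 := h' z
  simp only [id, Fin.sum_univ_add, Fin.append_left, Fin.append_right] at h1 h2 ⊢
  rw [add_sub_add_comm]
  linarith [norm_add_le (T z - ∑ i, hX.smulR (u i) (hX.inner (v i) z))
    (S z - ∑ i, hX.smulR (u' i) (hX.inner (v' i) z))]

theorem comp_left {T R R' : X → X} (hT : IsCptOn hX id T)
    (hR : HilbertModule.IsAdjointPair hX hX R R') : IsCptOn hX id fun z => R (T z) := fun ε hε => by
  obtain ⟨n, u, v, h⟩ := hT (ε / (‖hR.toCLM‖ + 1)) (by positivity)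
  refine ⟨n, fun i => R (u i), v, fun z => ?_⟩
  have h1 := h z
  simp only [id] at h1 ⊢
  have h2 : R (T z) - ∑ i, hX.smulR (R (u i)) (hX.inner (v i) z) =
      hR.toCLM (T z - ∑ i, hX.smulR (u i) (hX.inner (v i) z)) := by
    rw [map_sub, map_sum]
    simp only [hR.toCLM_apply, hR.map_smulR]
  rw [h2]
  calc _ ≤ ‖hR.toCLM‖ * (ε / (‖hR.toCLM‖ + 1) * ‖z‖) := hR.toCLM.le_opNorm_of_le h1
    _ ≤ (‖hR.toCLM‖ + 1) * (ε / (‖hR.toCLM‖ + 1) * ‖z‖) := by gcongr; linarith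
    _ = ε * ‖z‖ := by field_simp

theorem smul {T : X → X} (hT : IsCptOn hX id T) (c : ℂ) : IsCptOn hX id fun z => c • T z :=
  hT.comp_left (HilbertModule.IsAdjointPair.id.smul c)

theorem sum {ι : Type*} (s : Finset ι) {T : ι → X → X} (hT : ∀ i, IsCptOn hX id (T i)) :
    IsCptOn hX id fun z => ∑ i ∈ s, T i z := by
  classical
  induction s using Finset.induction_on with
  | empty => simpa using zero
  | insert i s hi ih => simpa only [Finset.sum_insert hi] using (hT i).add ih

/-- A sequence of bounded module maps converging strongly to zero converges to zero uniformly
on the image of the unit ball under a compact operator. -/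
theorem eventually_norm_comp_le {K : X → X} (hK : IsCptOn hX id K) {g : ℕ → X →L[ℂ] X}
    (hg : ∀ N x b, g N (hX.smulR x b) = hX.smulR (g N x) b)
    (hlim : ∀ x, Tendsto (fun N => g N x) atTop (𝓝 0)) {ε : ℝ} (hε : 0 < ε) :
    ∀ᶠ N in atTop, ∀ z, ‖g N (K z)‖ ≤ ε * ‖z‖ := by
  obtain ⟨C, hC⟩ := banach_steinhaus (g := g) fun x => by
    obtain ⟨C, hC⟩ := (hlim x).norm.bddAbove_range
    exact ⟨C, fun i => hC ⟨i, rfl⟩⟩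
  have hC0 : 0 ≤ C := (norm_nonneg _).trans (hC 0)
  obtain ⟨n, u, v, h⟩ := hK (ε / (2 * (C + 1))) (by positivity)
  have hs : Tendsto (fun N => ∑ i, ‖g N (u i)‖ * (4 * ‖v i‖)) atTop (𝓝 0) := by
    have : Tendsto (fun N => ∑ i, ‖g N (u i)‖ * (4 * ‖v i‖)) atTop
        (𝓝 (∑ i, ‖(0 : X)‖ * (4 * ‖v i‖))) :=
      tendsto_finsetSum _ fun i _ => (hlim (u i)).norm.mul_const _
    simpa using this
  filter_upwards [hs.eventually_le_const (half_pos hε)] with N hN z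
  have h1 := h z
  simp only [id] at h1
  set w := ∑ i, hX.smulR (u i) (hX.inner (v i) z) with hw
  have h2 : ‖g N (K z - w)‖ ≤ ε / 2 * ‖z‖ :=
    calc _ ≤ C * (ε / (2 * (C + 1)) * ‖z‖) := (g N).le_of_opNorm_le_of_le (hC N) h1
      _ ≤ (C + 1) * (ε / (2 * (C + 1)) * ‖z‖) := by gcongr; linarith
      _ = ε / 2 * ‖z‖ := by field_simp
  have h3 : ‖g N w‖ ≤ ε / 2 * ‖z‖ := by
    rw [hw, map_sum]
    calc _ ≤ ∑ i, ‖g N (u i)‖ * (4 * ‖v i‖) * ‖z‖ := by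
          refine norm_sum_le_of_le _ fun i _ => ?_
          rw [hg, mul_assoc]
          refine (hX.norm_smulR_le _ _).trans ?_
          gcongr
          exact hX.norm_inner_le _ _
      _ ≤ _ := by rw [← Finset.sum_mul]; gcongr
  calc ‖g N (K z)‖ = ‖g N (K z - w) + g N w‖ := by rw [← map_add, sub_add_cancel]
    _ ≤ _ := norm_add_le _ _
    _ ≤ ε * ‖z‖ := by linarith

end IsCptOn

section CStarAlgebra

variable {A : Type u} [NonUnitalCStarAlgebra A]

theorem IsPositiveElem.isSelfAdjoint {a : A} (h : IsPositiveElem a) : star a = a := by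
  obtain ⟨c, rfl⟩ := h
  simp

theorem norm_le_of_isPositiveElem_add_sub {g r : A} (h₁ : IsPositiveElem (g + r))
    (h₂ : IsPositiveElem (g - r)) : ‖r‖ ≤ 3 * ‖g‖ := by
  let _ := CStarAlgebra.spectralOrder A
  have := CStarAlgebra.spectralOrderedRing A
  obtain ⟨c, hc⟩ := h₁
  obtain ⟨d, hd⟩ := h₂
  have h0 : 0 ≤ g + r := hc ▸ star_mul_self_nonneg c
  have hle : g + r ≤ g + g := by
    rw [← sub_nonneg, add_sub_add_left_eq_sub, hd]
    exact star_mul_self_nonneg d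
  have h3 := CStarAlgebra.norm_le_norm_of_nonneg_of_le h0 hle
  have h4 : ‖r‖ ≤ ‖g + r‖ + ‖g‖ := by simpa using norm_sub_le (g + r) g
  linarith [norm_add_le g g]

theorem eq_of_forall_mul_left {x y : A} (h : ∀ a : A, a * x = a * y) : x = y := by
  rw [← sub_eq_zero, ← CStarRing.star_mul_self_eq_zero_iff, mul_sub, h, sub_self]

theorem eq_of_forall_mul_right {x y : A} (h : ∀ a : A, x * a = y * a) : x = y := by
  rw [← sub_eq_zero, ← CStarRing.mul_star_self_eq_zero_iff, sub_mul, h, sub_self]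

end CStarAlgebra

section Bimodule

variable {A B F : Type u} [NonUnitalCStarAlgebra A] [NonUnitalCStarAlgebra B]
  [NormedAddCommGroup F] [NormedSpace ℂ F] [CompleteSpace F] {bi : BiHilbertModule A B F}

theorem BiHilbertModule.innerL_actL_right (bi : BiHilbertModule A B F) (a : A) (x y : F) :
    bi.innerL x (bi.actL a y) = bi.innerL x y * star a := by
  rw [← bi.star_innerL, bi.innerL_actL_left, star_mul, bi.star_innerL]

namespace UpsilonData

open HilbertModule (IsAdjointPair)

variable (U : UpsilonData bi)

theorem map_zero : U.Υ (fun _ => 0) = 0 := by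
  have := U.add (fun _ => 0) (fun _ => 0) IsCptOn.zero IsCptOn.zero
  simpa using this

theorem map_smul {T : F → F} (hT : IsCptOn bi.right id T) (c : ℂ) :
    U.Υ (fun z => c • T z) = c • U.Υ T := by
  refine eq_of_forall_mul_left fun a => ?_
  rw [← U.bilin_left a _ (hT.smul c), mul_smul_comm, ← smul_mul_assoc, ← U.bilin_left _ _ hT]
  simp only [(bi.actL_corr.star_adjoint a).map_smul, bi.actL_corr.map_smul]

theorem map_sub {T S : F → F} (hT : IsCptOn bi.right id T) (hS : IsCptOn bi.right id S) :
    U.Υ (fun z => T z - S z) = U.Υ T - U.Υ S := by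
  have := U.add T (fun z => (-1 : ℂ) • S z) hT (hS.smul _)
  rw [U.map_smul hS] at this
  simpa [← sub_eq_add_neg] using this

theorem map_sum {ι : Type*} (s : Finset ι) {T : ι → F → F}
    (hT : ∀ i, IsCptOn bi.right id (T i)) :
    U.Υ (fun z => ∑ i ∈ s, T i z) = ∑ i ∈ s, U.Υ (T i) := by
  classical
  induction s using Finset.induction_on with
  | empty => simpa using U.map_zero
  | insert i s hi ih =>
    simp only [Finset.sum_insert hi]
    rw [U.add _ _ (hT i) (IsCptOn.sum s hT), ih]

theorem star_map_comp {X X' Y Y' : F → F} (hX : IsCptOn bi.right id X)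
    (hY : IsCptOn bi.right id Y) (hXX' : IsAdjointPair bi.right bi.right X X')
    (hYY' : IsAdjointPair bi.right bi.right Y Y') :
    star (U.Υ fun z => X' (Y z)) = U.Υ fun z => Y' (X z) := by
  have hxx := hX.comp_left hXX'.symm
  have hyy := hY.comp_left hYY'.symm
  have hxy := hY.comp_left hXX'.symm
  have hyx := hX.comp_left hYY'.symm
  have key : ∀ c : ℂ, star (c • (U.Υ fun z => X' (Y z)) + star c • U.Υ fun z => Y' (X z)) =
      c • (U.Υ fun z => X' (Y z)) + star c • U.Υ fun z => Y' (X z) := fun c => by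
    have h := (U.pos _ _ (hX.add (hY.smul c)) (hXX'.add (hYY'.smul c))).isSelfAdjoint
    have e : (fun z => X' (X z + c • Y z) + star c • Y' (X z + c • Y z)) = fun z =>
        (X' (X z) + c • X' (Y z)) + (star c • Y' (X z) + (star c * c) • Y' (Y z)) := by
      funext z
      rw [hXX'.symm.map_add, hYY'.symm.map_add, hXX'.symm.map_smul, hYY'.symm.map_smul,
        smul_add, smul_smul]
    rw [e, U.add _ _ (hxx.add (hxy.smul _)) ((hyx.smul _).add (hyy.smul _)),
      U.add _ _ hxx (hxy.smul _), U.add _ _ (hyx.smul _) (hyy.smul _), U.map_smul hxy,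
      U.map_smul hyx, U.map_smul hyy] at h
    have h1 := (U.pos _ _ hX hXX').isSelfAdjoint
    have h2 := (U.pos _ _ hY hYY').isSelfAdjoint
    have h3 : ∀ x f g y : A, c • f + star c • g =
        (x + c • f + (star c • g + (star c * c) • y)) - x - (star c * c) • y := fun _ _ _ _ => by
      abel
    rw [h3 (U.Υ fun z => X' (X z)) _ _ (U.Υ fun z => Y' (Y z)), star_sub, star_sub, h, h1,
      star_smul, h2, star_mul, star_star]
  have k1 := key 1
  have k2 := key Complex.I
  simp only [star_one, one_smul] at k1
  rw [star_add, star_smul, star_smul, star_star,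
    show star Complex.I = -Complex.I from Complex.conj_I] at k2
  rw [star_add] at k1
  set f := U.Υ fun z => X' (Y z)
  set g := U.Υ fun z => Y' (X z)
  have hI : ∀ b c : A, Complex.I • (-Complex.I • b + Complex.I • c) = b - c := fun b c => by
    simp only [smul_add, smul_smul, mul_neg, Complex.I_mul_I]
    module
  have k3 : star f - star g = g - f := by rw [← hI, k2, add_comm, hI]
  calc star f = (1 / 2 : ℂ) • ((star f + star g) + (star f - star g)) := by module
    _ = (1 / 2 : ℂ) • ((f + g) + (g - f)) := by
      rw [k1, k3]
    _ = g := by module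

theorem map_adjoint_comp_actL (hfin : ∀ a : A, IsCptOn bi.right id (bi.actL a)) {T T' : F → F}
    (hT : IsCptOn bi.right id T) (hTT' : IsAdjointPair bi.right bi.right T T') (a : A) :
    U.Υ (fun z => T' (bi.actL a z)) = star (U.Υ T) * a := by
  rw [← star_star (U.Υ fun z => T' (bi.actL a z)),
    U.star_map_comp hT (hfin a) hTT' (bi.actL_corr.star_adjoint a), U.bilin_left _ _ hT, star_mul,
    star_star]

theorem map_actL_star (hfin : ∀ a : A, IsCptOn bi.right id (bi.actL a)) (a : A) :
    U.Υ (bi.actL (star a)) = star (U.Υ (bi.actL a)) := by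
  refine eq_of_forall_mul_right fun b => ?_
  rw [← U.bilin_right _ _ (hfin _),
    U.map_adjoint_comp_actL hfin (hfin a) (bi.actL_corr.star_adjoint a)]

/-- `Υ(T' S T)` is controlled by the norm of `S`. -/
theorem norm_sandwich_le {T T' : F → F} (hT : IsCptOn bi.right id T)
    (hTT' : IsAdjointPair bi.right bi.right T T') (S : F →L[ℂ] F)
    (hS : IsAdjointPair bi.right bi.right S S) {ε : ℝ} (hε : 0 < ε) (hSε : ‖S‖ ≤ ε) :
    ‖U.Υ fun z => T' (S (T z))‖ ≤ 6 * ε * ‖U.Υ fun z => T' (T z)‖ := by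
  have hSc := (hT.comp_left hS).comp_left hTT'.symm
  have hTc := hT.comp_left hTT'.symm
  have key : ∀ t : ℝ, |t| = (2 * ε)⁻¹ →
      IsPositiveElem ((U.Υ fun z => T' (T z)) - (t : ℂ) • U.Υ fun z => T' (S (T z))) := by
    intro t ht
    have ha : IsAdjointPair bi.right bi.right ((t : ℂ) • S) ((t : ℂ) • S) := by
      have := hS.smul (t : ℂ)
      rw [RCLike.star_def, Complex.conj_ofReal] at this
      exact this
    obtain ⟨W, hW, hW2⟩ := bi.right.exists_sqrt_one_sub ((t : ℂ) • S) ha (by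
      rw [norm_smul, Complex.norm_real, Real.norm_eq_abs, ht, inv_mul_le_iff₀ (by positivity)]
      linarith)
    have := U.pos _ _ (hT.comp_left hW) (hW.comp hTT')
    have e : (fun z => T' (W (W (T z)))) = fun z => T' (T z) - (t : ℂ) • T' (S (T z)) := by
      funext z
      rw [hW2, ← hTT'.symm.map_smul]
      exact _root_.map_sub hTT'.symm.toCLM _ _
    rwa [e, U.map_sub hTc (hSc.smul _), U.map_smul hSc] at this
  have h1 := key _ (abs_of_pos (by positivity))
  have h2 := key (-(2 * ε)⁻¹) (by rw [abs_neg, abs_of_pos (by positivity)])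
  rw [Complex.ofReal_neg, neg_smul, sub_neg_eq_add] at h2
  have h3 := norm_le_of_isPositiveElem_add_sub h2 h1
  rw [norm_smul, Complex.norm_real, Real.norm_eq_abs, abs_of_pos (by positivity),
    inv_mul_le_iff₀ (by positivity)] at h3
  linarith

end UpsilonData

end Bimodule

section Index

open HilbertModule (IsAdjointPair)

variable {A B F MA : Type u} [NonUnitalCStarAlgebra A] [NonUnitalCStarAlgebra B] [CStarAlgebra MA]
  [NormedAddCommGroup F] [NormedSpace ℂ F] [CompleteSpace F] {bi : BiHilbertModule A B F}
  {M : MultiplierData A MA}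

theorem MultiplierData.ι_injective (M : MultiplierData A MA) : Function.Injective M.ι :=
  (AddMonoidHomClass.isometry_of_norm M.ι M.isometric).injective

variable (W : WatataniData bi M) (U : UpsilonData bi)

/-- The identity `Υ(φ(a)) = e^β a` for elements `a = (y x)* (y x)`. -/
theorem map_actL_sandwich (x y : A) :
    M.ι (U.Υ (bi.actL (star (y * x) * (y * x)))) = W.eβ * M.ι (star (y * x) * (y * x)) := by
  obtain ⟨w, hw⟩ : ∃ w, w = y * x := ⟨_, rfl⟩
  rw [← hw]
  have hfin := W.finite_index
  have hadj := bi.actL_corr.star_adjoint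
  have hmul := bi.actL_corr.map_mul
  have hone : ∀ N, IsAdjointPair bi.right bi.right
      (fun z => z - ∑ j ∈ Finset.range N,
        bi.right.smulR (W.frame j) (bi.right.inner (W.frame j) z))
      (fun z => z - ∑ j ∈ Finset.range N,
        bi.right.smulR (W.frame j) (bi.right.inner (W.frame j) z)) := fun N =>
    IsAdjointPair.id.sub <| by
      induction N with
      | zero =>
        intro x y
        simp [HilbertModule.inner_zero_left, HilbertModule.inner_zero_right]
      | succ N ih =>
        simp only [Finset.sum_range_succ]
        exact ih.add (bi.right.isAdjointPair_rankOne _ _)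
  -- the compressions `φ(y)* (1 - P_N) φ(y)`, which tend to zero in norm
  have hS : ∀ N, IsAdjointPair bi.right bi.right
      (fun z => bi.actL (star y) ((hone N).toCLM (bi.actL y z)))
      (fun z => bi.actL (star y) ((hone N).toCLM (bi.actL y z))) := fun N => by
    have := (hadj y).symm.comp ((hone N).comp (hadj y))
    exact this
  let r : ℕ → A := fun N => U.Υ fun z => bi.actL (star x) ((hS N).toCLM (bi.actL x z))
  have hr0 : Tendsto r atTop (𝓝 0) := by
    refine NormedAddGroup.tendsto_nhds_zero.2 fun ε hε => ?_
    obtain ⟨C, hC⟩ : ∃ C, C = ‖U.Υ fun z => bi.actL (star x) (bi.actL x z)‖ := ⟨_, rfl⟩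
    obtain ⟨K, hK⟩ : ∃ K, K = ‖(hadj (star y)).toCLM‖ := ⟨_, rfl⟩
    have hC0 : 0 ≤ C := hC ▸ norm_nonneg _
    have hK0 : 0 ≤ K := hK ▸ norm_nonneg _
    have hlim : ∀ z, Tendsto (fun N => (hone N).toCLM z) atTop (𝓝 0) := fun z => by
      simpa [IsAdjointPair.toCLM_apply] using (W.frame_spec z).const_sub z
    have hev := (hfin y).eventually_norm_comp_le (fun N z b => (hone N).map_smulR z b) hlim
      (ε := ε / (12 * (C + 1) * (K + 1))) (by positivity)
    filter_upwards [hev] with N hN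
    have hSN : ‖(hS N).toCLM‖ ≤ ε / (12 * (C + 1)) := by
      refine ContinuousLinearMap.opNorm_le_bound _ (by positivity) fun z => ?_
      calc _ ≤ K * (ε / (12 * (C + 1) * (K + 1)) * ‖z‖) :=
            by
              rw [hK]
              exact (hadj (star y)).toCLM.le_opNorm_of_le (hK ▸ hN z)
        _ ≤ (K + 1) * (ε / (12 * (C + 1) * (K + 1)) * ‖z‖) := by gcongr; linarith
        _ = _ := by field_simp
    calc ‖r N‖ ≤ 6 * (ε / (12 * (C + 1))) * C :=
          (U.norm_sandwich_le (hfin x) (hadj x) (hS N).toCLM (hS N) (by positivity) hSN).trans_eq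
            (by rw [hC])
      _ ≤ 6 * (ε / (12 * (C + 1))) * (C + 1) := by gcongr; linarith
      _ = ε / 2 := by field_simp; norm_num
      _ < ε := half_lt_self hε
  have hr : ∀ N, r N = U.Υ (bi.actL (star w * w)) -
      star w * (∑ j ∈ Finset.range N, bi.innerL (W.frame j) (W.frame j)) * w := fun N => by
    have e : (fun z => bi.actL (star x) ((hS N).toCLM (bi.actL x z))) = fun z =>
        bi.actL (star w * w) z - ∑ j ∈ Finset.range N,
          bi.right.smulR (bi.actL (star w) (W.frame j))
            (bi.right.inner (bi.actL (star w) (W.frame j)) z) := by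
      funext z
      simp only [(hadj (star w)) _ _, star_star, ← (hadj (star w)).map_smulR]
      change bi.actL (star x) (bi.actL (star y) ((hone N).toCLM (bi.actL y (bi.actL x z)))) = _
      rw [← hmul, ← hmul, ← star_mul, ← hw]
      change (hadj (star w)).toCLM (_ - _) = _
      rw [map_sub, map_sum]
      simp only [IsAdjointPair.toCLM_apply, hmul]
    change U.Υ _ = _
    rw [e, U.map_sub (hfin _) (IsCptOn.sum _ fun j => IsCptOn.rankOne _ _),
      U.map_sum _ fun j => IsCptOn.rankOne _ _]
    simp only [U.rank_one, bi.innerL_actL_left, bi.innerL_actL_right, star_star, ← mul_assoc,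
      Finset.mul_sum, Finset.sum_mul]
  have hlim : Tendsto (fun N => M.ι (r N)) atTop
      (𝓝 (M.ι (U.Υ (bi.actL (star w * w))) - M.ι (star w) * (W.eβ * M.ι w))) := by
    have h := ((W.index_spec w).const_mul (M.ι (star w))).const_sub
      (M.ι (U.Υ (bi.actL (star w * w))))
    refine h.congr fun N => ?_
    rw [hr, map_sub, map_mul, map_mul, map_sum, mul_assoc, Finset.sum_mul]
  have hι : Isometry M.ι := AddMonoidHomClass.isometry_of_norm M.ι M.isometric
  have h0 := (hι.continuous.tendsto 0).comp hr0
  rw [map_zero] at h0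
  rw [sub_eq_zero.1 (tendsto_nhds_unique hlim h0), map_mul, ← mul_assoc, ← W.eβ_central, mul_assoc]

/-- The map `Υ` sends the left action of `a` to `e^β a`. -/
theorem ι_map_actL (a : A) : M.ι (U.Υ (bi.actL a)) = W.eβ * M.ι a := by
  have hfin := W.finite_index
  let D : A → MA := fun a => M.ι (U.Υ (bi.actL a)) - W.eβ * M.ι a
  have hDl : ∀ u v, D (u * v) = M.ι u * D v := fun u v => by
    have : bi.actL (u * v) = fun z => bi.actL u (bi.actL v z) :=
      funext (bi.actL_corr.map_mul u v)
    simp only [D]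
    rw [this, U.bilin_left _ _ (hfin v), map_mul, map_mul, mul_sub, ← mul_assoc, ← mul_assoc,
      W.eβ_central]
  have hDr : ∀ u v, D (u * v) = D u * M.ι v := fun u v => by
    have : bi.actL (u * v) = fun z => bi.actL u (bi.actL v z) :=
      funext (bi.actL_corr.map_mul u v)
    simp only [D]
    rw [this, U.bilin_right _ _ (hfin u), map_mul, map_mul, sub_mul, mul_assoc]
  have hDstar : ∀ u, D (star u) = star (D u) := fun u => by
    simp only [D]
    rw [U.map_actL_star hfin, map_star, map_star, star_sub, star_mul, W.eβ_pos.isSelfAdjoint,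
      W.eβ_central]
  obtain ⟨q, hq⟩ := M.ideal_left W.eβ a
  obtain ⟨p, hp⟩ : ∃ p, M.ι p = D a := ⟨U.Υ (bi.actL a) - q, by rw [map_sub, hq]⟩
  suffices p = 0 by rw [← sub_eq_zero, ← map_zero M.ι, ← this, hp]
  refine eq_of_forall_mul_left fun y => ?_
  have h1 : star a * (star y * y * p) = 0 := M.ι_injective <| by
    have := sub_eq_zero.2 (map_actL_sandwich W U a y)
    rw [star_mul, mul_assoc, ← mul_assoc (star y)] at this
    rw [map_mul, map_mul, hp, ← hDl, ← hDl, map_zero]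
    exact this
  have h2 : star (y * p) * (y * p) = 0 := M.ι_injective <| by
    have h3 := hDr (star a) (star y * y * p)
    have h4 : D 0 = 0 := by simpa using hDl 0 0
    rw [h1, h4, hDstar, ← hp, ← map_star, ← map_mul] at h3
    rw [map_zero, h3, star_mul]
    simp only [mul_assoc]
  rw [CStarRing.star_mul_self_eq_zero_iff] at h2
  rw [h2, mul_zero]

end Index

/-- Let `F` be a regular bi-Hilbertian `A`–`B`-bimodule with
right Watatani index `e^β ∈ M(A)`.  Then `P₀ : K(F_B) → K(F_B)`,
`P₀(T) = e^{−β} Υ(T) Id_F`, is an `A`-bilinear adjointable projection on the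
bi-Hilbertian bimodule `K(F_B) ≅ F ⊗_B F*` (with right `A`-valued inner product
`⟨T, S⟩_A = Υ(T† S)`), and its image `A · Id_F` is a complemented sub-bimodule
isomorphic to the identity bimodule `A` (via `a ↦ a e^{−β/2} Id_F = aZ`, which
satisfies `⟨aZ, a'Z⟩_A = a* a'`). -/
theorem watatani_projection {A B F MA : Type u}
    [NonUnitalCStarAlgebra A] [NonUnitalCStarAlgebra B] [CStarAlgebra MA]
    [NormedAddCommGroup F] [NormedSpace ℂ F] [CompleteSpace F]
    (bi : BiHilbertModule A B F) (M : MultiplierData A MA)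
    (W : WatataniData bi M) (U : UpsilonData bi) :
    -- the projection `P₀(T) = e^{-β} Υ(T) Id_F`
    letI P₀ : (F → F) → (F → F) := fun T => fun z => W.actM (W.einvβ * M.ι (U.Υ T)) z
    -- `P₀` maps compacts to compacts
    (∀ T : F → F, IsCptOn bi.right id T → IsCptOn bi.right id (P₀ T)) ∧
    -- `P₀` is idempotent on compacts
    (∀ T : F → F, IsCptOn bi.right id T → P₀ (P₀ T) = P₀ T) ∧
    -- `P₀` is `A`-bilinear
    (∀ (a : A) (T : F → F), IsCptOn bi.right id T →
      P₀ (fun z => bi.actL a (T z)) = (fun z => bi.actL a (P₀ T z)) ∧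
      P₀ (fun z => T (bi.actL a z)) = (fun z => P₀ T (bi.actL a z))) ∧
    -- `P₀` is self-adjoint for the right `A`-valued inner product `⟨T,S⟩ = Υ(T† S)`
    (∀ T T' S : F → F, IsCptOn bi.right id T → IsCptOn bi.right id S →
      HilbertModule.IsAdjointPair bi.right bi.right T T' →
      U.Υ (fun z => W.actM (star (W.einvβ * M.ι (U.Υ T))) (S z)) =
        U.Υ (fun z => T' (P₀ S z))) ∧
    -- image `A · Id_F`: a complemented sub-bimodule isomorphic to `A`
    (∀ a : A, IsCptOn bi.right id (fun z => bi.actL a z) ∧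
      P₀ (fun z => bi.actL a z) = (fun z => bi.actL a z)) ∧
    (∀ T : F → F, IsCptOn bi.right id T → ∃ a : A, P₀ T = fun z => bi.actL a z) ∧
    -- the isomorphism with the identity bimodule: `⟨aZ, a'Z⟩_A = a* a'`
    (∀ a a' : A,
      U.Υ (fun z => W.actM (W.ehalf * M.ι (star a) * M.ι a' * W.ehalf) z) = star a * a') := by
  have hfin := W.finite_index
  have hadj := bi.actL_corr.star_adjoint
  -- `b` represents the multiplier `e^{-β} a` of `A`
  have hact : ∀ a b : A, M.ι b = W.einvβ * M.ι a →
      (fun z => W.actM (W.einvβ * M.ι a) z) = bi.actL b := fun a b hb => by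
    rw [← hb]; exact funext (W.actM_ι b)
  have hP : ∀ T : F → F, ∃ b : A, M.ι b = W.einvβ * M.ι (U.Υ T) ∧
      (fun z => W.actM (W.einvβ * M.ι (U.Υ T)) z) = bi.actL b := fun T => by
    obtain ⟨b, hb⟩ := M.ideal_left W.einvβ (U.Υ T)
    exact ⟨b, hb, hact _ _ hb⟩
  have hfix : ∀ a : A, (fun z => W.actM (W.einvβ * M.ι (U.Υ (bi.actL a))) z) = bi.actL a :=
    fun a => hact _ _ <| by
      rw [ι_map_actL W U, ← mul_assoc, W.einvβ_central, W.eβ_inv, one_mul]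
  refine ⟨fun T _ => ?_, fun T _ => ?_, fun a T hT => ⟨?_, ?_⟩, fun T T' S hT hS hTT' => ?_,
    fun a => ⟨hfin a, hfix a⟩, fun T _ => ?_, fun a a' => ?_⟩
  · obtain ⟨b, -, h⟩ := hP T
    beta_reduce
    exact h ▸ hfin b
  · obtain ⟨b, -, h⟩ := hP T
    simp only [h]
    exact hfix b
  · funext z
    beta_reduce
    rw [U.bilin_left a T hT, map_mul, ← mul_assoc, W.einvβ_central, mul_assoc, W.actM_mul,
      W.actM_ι]
  · funext z
    beta_reduce
    rw [U.bilin_right a T hT, map_mul, ← mul_assoc, W.actM_mul, W.actM_ι]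
  · obtain ⟨a, ha, -⟩ := hP T
    obtain ⟨b, hb, h⟩ := hP S
    have hcomm : star W.einvβ = W.einvβ := by
      rw [← W.ehalf_sq, star_mul, W.ehalf_pos.isSelfAdjoint]
    have e : (fun z => T' (W.actM (W.einvβ * M.ι (U.Υ S)) z)) = fun z => T' (bi.actL b z) :=
      funext fun z => congrArg T' (congrFun h z)
    rw [← ha, ← map_star, funext fun z => W.actM_ι (star a) (S z), e, U.bilin_left _ _ hS,
      U.map_adjoint_comp_actL hfin hT hTT']
    refine M.ι_injective ?_
    rw [map_mul, map_mul, map_star, ha, hb, star_mul, hcomm, map_star, mul_assoc]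
  · obtain ⟨b, -, h⟩ := hP T
    exact ⟨b, h⟩
  · have e : W.ehalf * M.ι (star a) * M.ι a' * W.ehalf = W.einvβ * M.ι (star a * a') := by
      rw [← W.ehalf_central, ← W.ehalf_sq, map_mul]
      simp only [mul_assoc]
    obtain ⟨b, hb⟩ := M.ideal_left W.einvβ (star a * a')
    rw [e, hact _ _ hb]
    refine M.ι_injective ?_
    rw [ι_map_actL W U, hb, ← mul_assoc, W.eβ_inv, one_mul]
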